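/- arXiv:2010.08019 — 3 statements merged into one kernel-verified Lean document; each statement's English description precedes it below -/
import Mathlib

section
/- Let V be a set, let Y and Z be real inner product spaces, let A : V → Y and B : V → Z be maps, let f ∈ Y, g ∈ Z, and τ ≥ 0. Let Φ_1, …, Φ_N be an orthonormal family in Y and define J(v) = ‖A v − f‖²_Y + τ ‖B v − g‖²_Z and Jʰ(v) = ∑_{i=1}^N ⟨A v − f, Φ_i⟩² + τ ‖B v − g‖²_Z. Let (S_n)_{n≥1} be an increasing sequence of subsets of V, let T ⊆ V, and suppose there is a sequence (v*_k)_{k≥1} in T such that for each k there exists n with v*_k ∈ S_n, and J(v*_k) → 0 as k → ∞. Let (δ_n)_{n≥1} be a sequence of nonnegative reals with δ_n → 0, and let (u_n)_{n≥1} satisfy u_n ∈ S_n ∩ T and Jʰ(u_n) ≤ Jʰ(w) + δ_n for all w ∈ S_n ∩ T. Then Jʰ(u_n) → 0 as n → ∞. -/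
/-! The projected loss is squeezed between `0` and the full loss: Bessel's inequality for the
orthonormal family `Φ` gives `0 ≤ Jʰ ≤ J` pointwise. Given `ε > 0`, choose `k` with
`J (v*ₖ) < ε / 2`. As the classes `Sₙ` increase, `v*ₖ` is an admissible competitor for all large
`n`, so quasi-minimality yields `Jʰ (uₙ) ≤ J (v*ₖ) + δₙ < ε` once also `δₙ < ε / 2`. -/

open scoped InnerProductSpace

/-- Loss convergence for hp-variational residual minimization: if the feasible class
contains a sequence driving the full loss `J` to zero and reachable by the increasing
network classes `Sₙ`, then quasi-minimizers `uₙ` of the projected loss `Jʰ` over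
`Sₙ ∩ T` have `Jʰ (uₙ) → 0`. -/
theorem hpVRM_loss_convergence
    {V Y Z : Type*} [NormedAddCommGroup Y] [InnerProductSpace ℝ Y]
    [NormedAddCommGroup Z] [InnerProductSpace ℝ Z]
    (A : V → Y) (B : V → Z) (f : Y) (g : Z) (τ : ℝ) (hτ : 0 ≤ τ)
    {N : ℕ} (Φ : Fin N → Y) (hΦ : Orthonormal ℝ Φ)
    (J Jh : V → ℝ)
    (hJ : ∀ v, J v = ‖A v - f‖ ^ 2 + τ * ‖B v - g‖ ^ 2)
    (hJh : ∀ v, Jh v = (∑ i, ⟪A v - f, Φ i⟫_ℝ ^ 2) + τ * ‖B v - g‖ ^ 2)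
    (S : ℕ → Set V) (hS : Monotone S) (T : Set V)
    (vstar : ℕ → V) (hvT : ∀ k, vstar k ∈ T) (hvS : ∀ k, ∃ n, vstar k ∈ S n)
    (hvJ : Filter.Tendsto (fun k => J (vstar k)) Filter.atTop (nhds 0))
    (δ : ℕ → ℝ) (hδ0 : ∀ n, 0 ≤ δ n)
    (hδ : Filter.Tendsto δ Filter.atTop (nhds 0))
    (u : ℕ → V) (hu : ∀ n, u n ∈ S n ∩ T)
    (hquasi : ∀ n, ∀ w ∈ S n ∩ T, Jh (u n) ≤ Jh w + δ n) :
    Filter.Tendsto (fun n => Jh (u n)) Filter.atTop (nhds 0) := by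
  have hnonneg : ∀ v, 0 ≤ Jh v := fun v => by
    rw [hJh]
    positivity
  -- Bessel's inequality, after moving `Φ i` to the first slot of the inner product.
  have hle : ∀ v, Jh v ≤ J v := fun v => by
    have h := hΦ.sum_inner_products_le (A v - f) (s := Finset.univ)
    simp only [Real.norm_eq_abs, sq_abs] at h
    rw [hJ, hJh]
    simp only [real_inner_comm (Φ _)]
    linarith
  refine tendsto_order.2
    ⟨fun a ha => Filter.Eventually.of_forall fun n => ha.trans_le (hnonneg _), fun ε hε => ?_⟩
  obtain ⟨k, hk⟩ := (hvJ.eventually_lt_const (half_pos hε)).exists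
  obtain ⟨m, hm⟩ := hvS k
  filter_upwards [hδ.eventually_lt_const (half_pos hε), Filter.eventually_ge_atTop m] with n hδn hmn
  have hcomp := hquasi n (vstar k) ⟨hS hmn hm, hvT k⟩
  linarith [hle (vstar k)]
end

section
/- Let V be a real normed vector space, let Y and Z be real inner product spaces, let A : V → Y and B : V → Z be maps, f ∈ Y, g ∈ Z, τ ≥ 1, u* ∈ V, C₁ > 0, and ε ≥ 0. Let Φ_1, …, Φ_N be an orthonormal family in Y and define J(v) = ‖A v − f‖²_Y + τ ‖B v − g‖²_Z and Jʰ(v) = ∑_{i=1}^N ⟨A v − f, Φ_i⟩² + τ ‖B v − g‖²_Z. Let S ⊆ V and suppose: (i) C₁² ‖v − u*‖²_V ≤ 2 J(v) for every v ∈ S; (ii) ‖(A v − f) − ∑_{i=1}^N ⟨A v − f, Φ_i⟩ Φ_i‖²_Y ≤ ε for every v ∈ S; (iii) u ∈ S and δ ≥ 0 satisfy Jʰ(u) ≤ Jʰ(w) + δ for all w ∈ S. Then ‖u − u*‖_V ≤ √2 C₁⁻¹ (Jʰ(u) + δ + ε)^{1/2}. -/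
/-! The orthonormal family splits the squared residual, by Pythagoras, into the sum of its squared
coefficients and the squared norm of the part orthogonal to the span
(`norm_sq_eq_sum_inner_sq_add`). On the feasible set the second part is at most `ε`, so
`J u ≤ Jh u + ε ≤ Jh u + δ + ε`, and coercivity turns this into a bound on the error. -/

open scoped InnerProductSpace

/-- Pythagoras for the orthogonal projection onto the span of a finite orthonormal family. -/
lemma norm_sq_eq_sum_inner_sq_add {Y : Type*} [NormedAddCommGroup Y] [InnerProductSpace ℝ Y]
    {N : ℕ} {Φ : Fin N → Y} (hΦ : Orthonormal ℝ Φ) (r : Y) :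
    ‖r‖ ^ 2 = (∑ i, ⟪r, Φ i⟫_ℝ ^ 2) + ‖r - ∑ i, ⟪r, Φ i⟫_ℝ • Φ i‖ ^ 2 := by
  have h1 : ⟪r, ∑ i, ⟪r, Φ i⟫_ℝ • Φ i⟫_ℝ = ∑ i, ⟪r, Φ i⟫_ℝ ^ 2 := by
    simp only [inner_sum, real_inner_smul_right, pow_two]
  have h2 : ‖∑ i, ⟪r, Φ i⟫_ℝ • Φ i‖ ^ 2 = ∑ i, ⟪r, Φ i⟫_ℝ ^ 2 := by
    rw [← real_inner_self_eq_norm_sq, hΦ.inner_sum]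
    simp [pow_two]
  rw [norm_sub_sq_real, h1, h2]
  ring

/-- A posteriori error estimate for hp-variational residual minimization: under the
coercivity hypothesis for the full loss `J` and an `ε`-control of the projection residual
on the feasible set `S`, every quasi-minimizer `u` of the projected loss `Jʰ` over `S`
with slack `δ` satisfies `‖u − u*‖ ≤ √2 C₁⁻¹ (Jʰ(u) + δ + ε)^{1/2}`. -/
theorem hpVRM_a_posteriori_error_estimate
    {V Y Z : Type*} [NormedAddCommGroup V] [NormedSpace ℝ V]
    [NormedAddCommGroup Y] [InnerProductSpace ℝ Y]
    [NormedAddCommGroup Z] [InnerProductSpace ℝ Z]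
    (A : V → Y) (B : V → Z) (f : Y) (g : Z) (τ : ℝ) (hτ : 1 ≤ τ)
    (ustar : V) (C₁ : ℝ) (hC₁ : 0 < C₁) (ε : ℝ) (hε : 0 ≤ ε)
    {N : ℕ} (Φ : Fin N → Y) (hΦ : Orthonormal ℝ Φ)
    (J Jh : V → ℝ)
    (hJ : ∀ v, J v = ‖A v - f‖ ^ 2 + τ * ‖B v - g‖ ^ 2)
    (hJh : ∀ v, Jh v = (∑ i, ⟪A v - f, Φ i⟫_ℝ ^ 2) + τ * ‖B v - g‖ ^ 2)
    (S : Set V)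
    (hcoer : ∀ v ∈ S, C₁ ^ 2 * ‖v - ustar‖ ^ 2 ≤ 2 * J v)
    (hproj : ∀ v ∈ S, ‖(A v - f) - ∑ i, ⟪A v - f, Φ i⟫_ℝ • Φ i‖ ^ 2 ≤ ε)
    (u : V) (hu : u ∈ S) (δ : ℝ) (hδ : 0 ≤ δ)
    (hquasi : ∀ w ∈ S, Jh u ≤ Jh w + δ) :
    ‖u - ustar‖ ≤ Real.sqrt 2 * C₁⁻¹ * Real.sqrt (Jh u + δ + ε) := by
  have hJu : J u ≤ Jh u + δ + ε := by
    have h := norm_sq_eq_sum_inner_sq_add hΦ (A u - f)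
    have hε' := hproj u hu
    rw [hJ, hJh]
    linarith
  have hsq : (C₁ * ‖u - ustar‖) ^ 2 ≤ 2 * (Jh u + δ + ε) := by
    rw [mul_pow]
    linarith [hcoer u hu]
  have hroot : C₁ * ‖u - ustar‖ ≤ Real.sqrt 2 * Real.sqrt (Jh u + δ + ε) := by
    rw [← Real.sqrt_mul zero_le_two]
    exact Real.le_sqrt_of_sq_le hsq
  calc ‖u - ustar‖ = C₁⁻¹ * (C₁ * ‖u - ustar‖) := by field_simp
    _ ≤ C₁⁻¹ * (Real.sqrt 2 * Real.sqrt (Jh u + δ + ε)) := by gcongr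
    _ = Real.sqrt 2 * C₁⁻¹ * Real.sqrt (Jh u + δ + ε) := by ring
end

section
/- Let V be a real normed vector space, let Y and Z be real inner product spaces, let A : V → Y and B : V → Z be maps, f ∈ Y, g ∈ Z, τ ≥ 1, u* ∈ V, C₁ > 0, and ε ≥ 0. Let Φ_1, …, Φ_N be an orthonormal family in Y and define J(v) = ‖A v − f‖²_Y + τ ‖B v − g‖²_Z and Jʰ(v) = ∑_{i=1}^N ⟨A v − f, Φ_i⟩² + τ ‖B v − g‖²_Z. Let (S_n)_{n≥1} be an increasing sequence of subsets of V and T ⊆ V, and suppose: (i) C₁² ‖v − u*‖²_V ≤ 2 J(v) for every v ∈ T; (ii) ‖(A v − f) − ∑_{i=1}^N ⟨A v − f, Φ_i⟩ Φ_i‖²_Y ≤ ε for every v ∈ T; (iii) there is a sequence (v*_k)_{k≥1} in T such that for each k there exists n with v*_k ∈ S_n, and J(v*_k) → 0 as k → ∞; (iv) (δ_n)_{n≥1} is a sequence of nonnegative reals with δ_n → 0, and (u_n)_{n≥1} satisfies u_n ∈ S_n ∩ T and Jʰ(u_n) ≤ Jʰ(w) + δ_n for all w ∈ S_n ∩ T.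 Then limsup_{n→∞} ‖u_n − u*‖_V ≤ √2 C₁⁻¹ ε^{1/2}. -/
/-!
The residual `r = A v - f` satisfies `‖r‖² = ∑ ⟪r, Φ i⟫² + ‖r - ∑ ⟪r, Φ i⟫ Φ i‖²` (Pythagoras),
so `Jh ≤ J` everywhere, while `J ≤ Jh + ε` on `T` by the projection hypothesis. Given `η > 0`, pick
`w = vstar k` with `J w < η / 2`; since `S` is increasing, `w` is an admissible competitor for all
large `n`, and quasi-minimality gives
`J (u n) ≤ Jh (u n) + ε ≤ Jh w + δ n + ε ≤ J w + δ n + ε < ε + η`. Coercivity turns this into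
`‖u n - ustar‖ ≤ √2 C₁⁻¹ √(ε + η)` for all large `n`, and letting `η ↓ 0` concludes.
-/

open scoped InnerProductSpace

/-- Pythagoras for the orthogonal projection onto the span of a finite orthonormal family. -/
lemma norm_sub_proj_sq {Y : Type*} [NormedAddCommGroup Y] [InnerProductSpace ℝ Y]
    {N : ℕ} {Φ : Fin N → Y} (hΦ : Orthonormal ℝ Φ) (r : Y) :
    ‖r - ∑ i, ⟪r, Φ i⟫_ℝ • Φ i‖ ^ 2 = ‖r‖ ^ 2 - ∑ i, ⟪r, Φ i⟫_ℝ ^ 2 := by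
  have h1 : ⟪r, ∑ i, ⟪r, Φ i⟫_ℝ • Φ i⟫_ℝ = ∑ i, ⟪r, Φ i⟫_ℝ ^ 2 := by
    simp only [inner_sum, real_inner_smul_right, pow_two]
  have h2 : ‖∑ i, ⟪r, Φ i⟫_ℝ • Φ i‖ ^ 2 = ∑ i, ⟪r, Φ i⟫_ℝ ^ 2 := by
    rw [← real_inner_self_eq_norm_sq, hΦ.inner_sum]
    simp [pow_two]
  rw [norm_sub_sq_real, h1, h2]
  ring

/-- Convergence of hp-variational residual minimization: under coercivity of the full
loss `J`, an `ε`-control of the projection residual on the feasible class `T`, and the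
existence of a sequence in `T` reachable by the increasing classes `Sₙ` driving `J` to
zero, quasi-minimizers `uₙ` of the projected loss `Jʰ` over `Sₙ ∩ T` satisfy
`limsupₙ ‖uₙ − u*‖ ≤ √2 C₁⁻¹ √ε`. -/
theorem hpVRM_convergence
    {V Y Z : Type*} [NormedAddCommGroup V] [NormedSpace ℝ V]
    [NormedAddCommGroup Y] [InnerProductSpace ℝ Y]
    [NormedAddCommGroup Z] [InnerProductSpace ℝ Z]
    (A : V → Y) (B : V → Z) (f : Y) (g : Z) (τ : ℝ) (hτ : 1 ≤ τ)
    (ustar : V) (C₁ : ℝ) (hC₁ : 0 < C₁) (ε : ℝ) (hε : 0 ≤ ε)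
    {N : ℕ} (Φ : Fin N → Y) (hΦ : Orthonormal ℝ Φ)
    (J Jh : V → ℝ)
    (hJ : ∀ v, J v = ‖A v - f‖ ^ 2 + τ * ‖B v - g‖ ^ 2)
    (hJh : ∀ v, Jh v = (∑ i, ⟪A v - f, Φ i⟫_ℝ ^ 2) + τ * ‖B v - g‖ ^ 2)
    (S : ℕ → Set V) (hS : Monotone S) (T : Set V)
    (hcoer : ∀ v ∈ T, C₁ ^ 2 * ‖v - ustar‖ ^ 2 ≤ 2 * J v)
    (hproj : ∀ v ∈ T, ‖(A v - f) - ∑ i, ⟪A v - f, Φ i⟫_ℝ • Φ i‖ ^ 2 ≤ ε)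
    (vstar : ℕ → V) (hvT : ∀ k, vstar k ∈ T) (hvS : ∀ k, ∃ n, vstar k ∈ S n)
    (hvJ : Filter.Tendsto (fun k => J (vstar k)) Filter.atTop (nhds 0))
    (δ : ℕ → ℝ) (hδ0 : ∀ n, 0 ≤ δ n)
    (hδ : Filter.Tendsto δ Filter.atTop (nhds 0))
    (u : ℕ → V) (hu : ∀ n, u n ∈ S n ∩ T)
    (hquasi : ∀ n, ∀ w ∈ S n ∩ T, Jh (u n) ≤ Jh w + δ n) :
    Filter.limsup (fun n => ‖u n - ustar‖) Filter.atTop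
      ≤ Real.sqrt 2 * C₁⁻¹ * Real.sqrt ε := by
  have hle : ∀ v, Jh v ≤ J v := fun v => by
    have h := norm_sub_proj_sq hΦ (A v - f)
    have h' := sq_nonneg ‖(A v - f) - ∑ i, ⟪A v - f, Φ i⟫_ℝ • Φ i‖
    rw [hJ, hJh]; linarith
  have hge : ∀ v ∈ T, J v ≤ Jh v + ε := fun v hv => by
    have h := norm_sub_proj_sq hΦ (A v - f)
    have h' := hproj v hv
    rw [hJ, hJh]; linarith
  have key : ∀ η > 0, Filter.limsup (fun n => ‖u n - ustar‖) Filter.atTop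
      ≤ √2 * C₁⁻¹ * √(ε + η) := by
    intro η hη
    obtain ⟨k, hk⟩ := (hvJ.eventually (gt_mem_nhds (half_pos hη))).exists
    obtain ⟨m, hm⟩ := hvS k
    have hev : ∀ᶠ n in Filter.atTop, ‖u n - ustar‖ ≤ √2 * C₁⁻¹ * √(ε + η) := by
      filter_upwards [Filter.eventually_ge_atTop m, hδ.eventually (gt_mem_nhds (half_pos hη))]
        with n hn hδn
      have hJu : J (u n) ≤ ε + η := by
        linarith [hge _ (hu n).2, hquasi n _ ⟨hS hn hm, hvT k⟩, hle (vstar k)]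
      have hc := hcoer _ (hu n).2
      refine (sq_le_sq₀ (norm_nonneg _) (by positivity)).1 ?_
      rw [mul_pow, mul_pow, Real.sq_sqrt zero_le_two, Real.sq_sqrt (by positivity), inv_pow,
        mul_assoc, mul_left_comm, le_inv_mul_iff₀ (by positivity)]
      linarith
    -- the real-valued `limsup` is only meaningful because the norms are bounded below by `0`
    exact Filter.limsup_le_of_le
      (Filter.isCoboundedUnder_le_of_le Filter.atTop fun n => norm_nonneg (u n - ustar)) hev
  have hcont : Filter.Tendsto (fun η : ℝ => √2 * C₁⁻¹ * √(ε + η)) (nhdsWithin 0 (Set.Ioi 0))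
      (nhds (√2 * C₁⁻¹ * √ε)) := by
    have h : Continuous fun η : ℝ => √2 * C₁⁻¹ * √(ε + η) := by fun_prop
    simpa using (h.tendsto 0).mono_left nhdsWithin_le_nhds
  exact ge_of_tendsto hcont (Filter.eventually_of_mem self_mem_nhdsWithin key)
end
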